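/- arXiv:1602.01596 — 2 statements merged into one kernel-verified Lean document; each statement's English description precedes it below -/
import Mathlib

section
/- Let k be an algebraically closed field of characteristic 2 and let L = k((t)). Every ℤ/2-extension M/L admits a unique Artin-Schreier representative a ∈ t⁻¹k[t⁻¹] (i.e., M ≅ L[x]/(x²−x−a)) such that a is a polynomial in t⁻¹ with only odd-degree terms. -/
/-!
Write `℘ x = x ^ p - x`. In characteristic `p` this is an additive endomorphism, and if `k` is
perfect and `℘` is onto on `k`, then `k((t))` is the direct sum of the standard forms and the image
of `℘`. The sum is everything because Hensel's lemma lifts a solution of `℘ u = f` modulo `t` when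
`f` is a power series, while `c t^(-pm) = ℘ (d t^(-m)) + d t^(-m)` with `d ^ p = c` trades an
exponent divisible by `p` for a smaller one. The sum is direct because a pole of `u` of order `m`
gives `℘ u` a pole of order `pm`, whereas the pole orders of standard forms are prime to `p`.

For a separable quadratic extension `M / L` in characteristic 2, an element `y` of trace one
satisfies `y² - y = -N(y)`, so Artin–Schreier representatives exist. The nontrivial automorphism
sends every Artin–Schreier generator `x` to `x + 1`, so differences of generators lie in `L` and the
representatives form a coset of `℘ L`, which meets a complement of `℘ L` exactly once.
-/

open Polynomial
open scoped LaurentSeries PowerSeries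

section ArtinSchreier

/-- The Artin–Schreier map `x ↦ x ^ p - x`, as an additive endomorphism. -/
def artinSchreier (R : Type*) [CommRing R] (p : ℕ) [ExpChar R p] : R →+ R :=
  (frobenius R p).toAddMonoidHom - AddMonoidHom.id R

@[simp]
lemma artinSchreier_apply {R : Type*} [CommRing R] (p : ℕ) [ExpChar R p] (x : R) :
    artinSchreier R p x = x ^ p - x :=
  rfl

lemma artinSchreier_surjective_of_isAlgClosed (k : Type*) [Field k] [IsAlgClosed k] (p : ℕ)
    [Fact p.Prime] [CharP k p] : Function.Surjective (artinSchreier k p) := by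
  intro c
  have hp : p.Prime := Fact.out
  have hdeg : (X ^ p - (X + C c) : k[X]).degree = p := by
    rw [degree_sub_eq_left_of_degree_lt] <;> simp [hp.one_lt]
  obtain ⟨b, hb⟩ := IsAlgClosed.exists_root (X ^ p - (X + C c)) (by simp [hdeg, hp.ne_zero])
  exact ⟨b, by simpa [sub_eq_zero, sub_eq_iff_eq_add'] using hb⟩

lemma mem_range_artinSchreier_of_henselianRing {R : Type*} [CommRing R] {p : ℕ} [Fact p.Prime]
    [CharP R p] {I : Ideal R} [HenselianRing R I] {a b : R} (h : artinSchreier R p b - a ∈ I) :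
    a ∈ (artinSchreier R p).range := by
  have : Nontrivial R := CharP.nontrivial_of_char_ne_one (Fact.out (p := p.Prime)).ne_one
  have hmonic : (X ^ p - (X + C a)).Monic :=
    monic_X_pow_sub (by simp [(Fact.out (p := p.Prime)).one_lt])
  have hderiv : derivative (X ^ p - (X + C a)) = -1 := by simp [derivative_X_pow]
  obtain ⟨u, hu, -⟩ := HenselianRing.is_henselian (I := I) (X ^ p - (X + C a)) hmonic b
    (by simpa [sub_sub] using h) (by simp [hderiv])
  exact ⟨u, by simpa [sub_eq_zero, sub_eq_iff_eq_add'] using hu⟩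

end ArtinSchreier

section SeriesInCharP

instance charP_powerSeries (R : Type*) [Semiring R] (p : ℕ) [CharP R p] : CharP R⟦X⟧ p :=
  charP_of_injective_ringHom PowerSeries.C_injective p

instance charP_laurentSeries (R : Type*) [Semiring R] (p : ℕ) [CharP R p] : CharP R⸨X⸩ p :=
  charP_of_injective_ringHom HahnSeries.C_injective p

variable {R : Type*} [CommRing R] {p : ℕ} [Fact p.Prime] [CharP R p]

lemma artinSchreier_powerSeries_surjective (h : Function.Surjective (artinSchreier R p)) :
    Function.Surjective (artinSchreier R⟦X⟧ p) := by
  intro f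
  obtain ⟨b, hb⟩ := h (PowerSeries.constantCoeff f)
  have hroot : artinSchreier R⟦X⟧ p (PowerSeries.C b) - f ∈ Ideal.span {PowerSeries.X} := by
    rw [Ideal.mem_span_singleton, PowerSeries.X_dvd_iff]
    simpa [sub_eq_zero] using hb
  exact mem_range_artinSchreier_of_henselianRing hroot

end SeriesInCharP

lemma exists_powerSeries_of_coeff_eq_zero {R : Type*} [Semiring R] {a : R⸨X⸩}
    (ha : ∀ i < 0, a.coeff i = 0) : ∃ f : R⟦X⟧, (f : R⸨X⸩) = a := by
  refine ⟨PowerSeries.mk fun n ↦ a.coeff n, ?_⟩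
  ext i
  rw [PowerSeries.coeff_coe]
  split_ifs with hi
  · exact (ha i hi).symm
  · simp [abs_of_nonneg (not_lt.mp hi)]

lemma eq_top_of_powerSeries_mem_of_single_mem {R : Type*} [Ring R] {H : AddSubgroup R⸨X⸩}
    (hpow : ∀ f : R⟦X⟧, (f : R⸨X⸩) ∈ H)
    (hsingle : ∀ n : ℕ, 0 < n → ∀ c : R, HahnSeries.single (-(n : ℤ)) c ∈ H) : H = ⊤ := by
  have mem_of_pole_le (n : ℕ) :
      ∀ a : R⸨X⸩, (∀ i < -(n : ℤ), a.coeff i = 0) → a ∈ H := by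
    induction n with
    | zero =>
      intro a ha
      obtain ⟨f, rfl⟩ := exists_powerSeries_of_coeff_eq_zero (by simpa using ha)
      exact hpow f
    | succ n ih =>
      intro a ha
      rw [← sub_add_cancel a (HahnSeries.single (-((n + 1 : ℕ) : ℤ)) (a.coeff (-(n + 1 : ℕ))))]
      refine H.add_mem (ih _ fun i hi ↦ ?_) (hsingle _ n.succ_pos _)
      rcases eq_or_ne i (-(n + 1 : ℕ)) with rfl | hne
      · simp
      · rw [HahnSeries.coeff_sub, HahnSeries.coeff_single_of_ne hne, ha i (by omega), sub_zero]
  refine (AddSubgroup.eq_top_iff' H).mpr fun a ↦ mem_of_pole_le a.order.natAbs a fun i hi ↦ ?_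
  exact HahnSeries.coeff_eq_zero_of_lt_order (by omega)

section StandardForm

variable {k : Type*} [Field k]

lemma aeval_single_one_inv_monomial (n : ℕ) (c : k) :
    aeval ((HahnSeries.single (1 : ℤ) (1 : k))⁻¹ : k⸨X⸩) (monomial n c) =
      HahnSeries.single (-(n : ℤ)) c := by
  rw [aeval_monomial, HahnSeries.inv_single, HahnSeries.single_pow, HahnSeries.algebraMap_apply',
    PowerSeries.algebraMap_apply]
  simp

lemma coeff_aeval_single_one_inv (P : k[X]) (i : ℤ) :
    (aeval ((HahnSeries.single (1 : ℤ) (1 : k))⁻¹ : k⸨X⸩) P).coeff i =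
      if i ≤ 0 then P.coeff i.natAbs else 0 := by
  induction P using Polynomial.induction_on' with
  | add P Q hP hQ =>
    simp only [map_add, HahnSeries.coeff_add, hP, hQ, coeff_add]
    split_ifs <;> simp
  | monomial n c =>
    rw [aeval_single_one_inv_monomial, HahnSeries.coeff_single, coeff_monomial]
    grind

/-- The Laurent series in standard form at `p`: polynomials in `t⁻¹` all of whose exponents are
prime to `p`. The exponent `0` is divisible by `p`, so the constant term vanishes. -/
def standardForm (k : Type*) [Field k] (p : ℕ) : AddSubgroup k⸨X⸩ where
  carrier := {a | ∃ P : k[X], (∀ n, P.coeff n ≠ 0 → ¬ p ∣ n) ∧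
    a = aeval ((HahnSeries.single (1 : ℤ) (1 : k))⁻¹ : k⸨X⸩) P}
  zero_mem' := ⟨0, by simp⟩
  add_mem' := by
    rintro _ _ ⟨P, hP, rfl⟩ ⟨Q, hQ, rfl⟩
    refine ⟨P + Q, fun n hn hpn ↦ hn ?_, (map_add _ P Q).symm⟩
    rw [coeff_add, of_not_not (mt (hP n) (not_not.mpr hpn)),
      of_not_not (mt (hQ n) (not_not.mpr hpn)), add_zero]
  neg_mem' := by
    rintro _ ⟨P, hP, rfl⟩
    exact ⟨-P, by simpa using hP, (map_neg _ P).symm⟩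

lemma mem_standardForm_two {a : k⸨X⸩} :
    a ∈ standardForm k 2 ↔ ∃ P : k[X], (∀ n, P.coeff n ≠ 0 → Odd n) ∧
      a = aeval ((HahnSeries.single (1 : ℤ) (1 : k))⁻¹ : k⸨X⸩) P := by
  simp only [← Nat.not_even_iff_odd, even_iff_two_dvd]
  rfl

variable {p : ℕ}

lemma single_neg_mem_standardForm {n : ℕ} (hn : ¬ p ∣ n) (c : k) :
    HahnSeries.single (-(n : ℤ)) c ∈ standardForm k p := by
  refine ⟨monomial n c, fun m hm ↦ ?_, (aeval_single_one_inv_monomial n c).symm⟩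
  rw [coeff_monomial, ne_eq, ite_eq_right_iff, not_forall] at hm
  exact hm.1 ▸ hn

lemma neg_and_not_dvd_of_mem_standardForm {a : k⸨X⸩} (ha : a ∈ standardForm k p) {i : ℤ}
    (hi : a.coeff i ≠ 0) : i < 0 ∧ ¬ (p : ℤ) ∣ i := by
  obtain ⟨P, hP, rfl⟩ := ha
  rw [coeff_aeval_single_one_inv, ne_eq, ite_eq_right_iff, not_forall] at hi
  obtain ⟨hi_nonpos, hcoeff⟩ := hi
  have hdvd : ¬ (p : ℤ) ∣ i := fun h ↦ hP _ hcoeff (Int.natCast_dvd.mp h)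
  exact ⟨lt_of_le_of_ne hi_nonpos fun h ↦ hdvd (h ▸ dvd_zero _), hdvd⟩

variable [Fact p.Prime] [CharP k p]

lemma disjoint_standardForm_range_artinSchreier :
    Disjoint (standardForm k p) (artinSchreier k⸨X⸩ p).range := by
  rw [AddSubgroup.disjoint_def]
  rintro _ ha ⟨u, rfl⟩
  by_contra hne
  have hu : u ≠ 0 := by rintro rfl; exact hne (map_zero _)
  have hp : 1 < p := Fact.out (p := p.Prime).one_lt
  have hpow : (u ^ p).order = p * u.order := by simp
  rcases lt_or_ge u.order 0 with hneg | hnonneg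
  · have hcoeff : (artinSchreier k⸨X⸩ p u).coeff (p * u.order) ≠ 0 := by
      rw [artinSchreier_apply, HahnSeries.coeff_sub,
        HahnSeries.coeff_eq_zero_of_lt_order (x := u) (by nlinarith), sub_zero, ← hpow, ne_eq,
        HahnSeries.coeff_order_eq_zero]
      exact pow_ne_zero p hu
    exact (neg_and_not_dvd_of_mem_standardForm ha hcoeff).2 (dvd_mul_right _ _)
  · refine hne (HahnSeries.ext (funext fun i ↦ by_contra fun hi ↦ hi ?_))
    have hi_neg : i < 0 := (neg_and_not_dvd_of_mem_standardForm ha hi).1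
    rw [artinSchreier_apply, HahnSeries.coeff_sub,
      HahnSeries.coeff_eq_zero_of_lt_order (hi_neg.trans_le hnonneg),
      HahnSeries.coeff_eq_zero_of_lt_order (hi_neg.trans_le (by rw [hpow]; positivity)), sub_zero,
      HahnSeries.coeff_zero]

lemma single_neg_mem_standardForm_sup_range [PerfectRing k p] {n : ℕ} (hn : 0 < n) (c : k) :
    HahnSeries.single (-(n : ℤ)) c ∈ standardForm k p ⊔ (artinSchreier k⸨X⸩ p).range := by
  induction n using Nat.strong_induction_on generalizing c with
  | _ n ih =>
    by_cases hpn : p ∣ n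
    · obtain ⟨m, rfl⟩ := hpn
      obtain ⟨d, rfl⟩ := surjective_frobenius k p c
      have hm : 0 < m := Nat.pos_of_mul_pos_left hn
      have hsplit : HahnSeries.single (-((p * m : ℕ) : ℤ)) (frobenius k p d) =
          artinSchreier k⸨X⸩ p (HahnSeries.single (-(m : ℤ)) d) +
            HahnSeries.single (-(m : ℤ)) d := by
        simp [HahnSeries.single_pow, frobenius_def]
      rw [hsplit]
      have hlt : m < p * m := lt_mul_of_one_lt_left hm (Fact.out (p := p.Prime).one_lt)
      exact add_mem (AddSubgroup.mem_sup_right ⟨_, rfl⟩) (ih m hlt hm d)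
    · exact AddSubgroup.mem_sup_left (single_neg_mem_standardForm hpn c)

theorem isCompl_standardForm_range_artinSchreier [PerfectRing k p]
    (hk : Function.Surjective (artinSchreier k p)) :
    IsCompl (standardForm k p) (artinSchreier k⸨X⸩ p).range := by
  refine ⟨disjoint_standardForm_range_artinSchreier, codisjoint_iff.mpr ?_⟩
  refine eq_top_of_powerSeries_mem_of_single_mem (fun f ↦ AddSubgroup.mem_sup_right ?_)
    fun n hn c ↦ single_neg_mem_standardForm_sup_range hn c
  obtain ⟨u, rfl⟩ := artinSchreier_powerSeries_surjective hk f
  exact ⟨u, by simp⟩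

end StandardForm

lemma existsUnique_mem_and_sub_mem_of_isCompl {A : Type*} [AddCommGroup A] {S T : AddSubgroup A}
    (h : IsCompl S T) (a : A) : ∃! s, s ∈ S ∧ s - a ∈ T := by
  obtain ⟨s, hs, t, ht, rfl⟩ := AddSubgroup.mem_sup.mp (h.sup_eq_top ▸ AddSubgroup.mem_top a)
  refine ⟨s, ⟨hs, by simpa using ht⟩, fun s' ⟨hs', ht'⟩ ↦ ?_⟩
  have hdiff : s' - s ∈ T := by simpa [sub_add_eq_sub_sub] using add_mem ht' ht
  exact sub_eq_zero.mp (AddSubgroup.disjoint_def.mp h.disjoint (sub_mem hs' hs) hdiff)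

section ArtinSchreierRepresentative

/-- `a : L` is an Artin–Schreier representative of `M / L` if `M` is generated over `L` by a root of
`x ^ p - x - a`. For `[M : L] = p` this says `M ≅ L[x]/(x ^ p - x - a)`. -/
def IsArtinSchreierRepresentative {L : Type*} (M : Type*) [CommRing L] [CommRing M] [Algebra L M]
    (p : ℕ) (a : L) : Prop :=
  ∃ x : M, x ^ p - x = algebraMap L M a ∧ Algebra.adjoin L {x} = ⊤

lemma adjoin_singleton_add_algebraMap {R A : Type*} [CommRing R] [Ring A] [Algebra R A] (x : A)
    (r : R) : Algebra.adjoin R {x + algebraMap R A r} = Algebra.adjoin R {x} := by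
  apply le_antisymm <;> refine Algebra.adjoin_singleton_le ?_
  · exact add_mem (Algebra.self_mem_adjoin_singleton R x) (algebraMap_mem _ r)
  · simpa using sub_mem (Algebra.self_mem_adjoin_singleton R (x + algebraMap R A r))
      (algebraMap_mem _ r)

lemma IsArtinSchreierRepresentative.add_artinSchreier {L M : Type*} [CommRing L] [CommRing M]
    [Algebra L M] [FaithfulSMul L M] {p : ℕ} [ExpChar L p] {a : L}
    (ha : IsArtinSchreierRepresentative M p a) (c : L) :
    IsArtinSchreierRepresentative M p (a + artinSchreier L p c) := by
  obtain ⟨x, hx, hgen⟩ := ha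
  have : ExpChar M p :=
    expChar_of_injective_algebraMap (FaithfulSMul.algebraMap_injective L M) p
  refine ⟨x + algebraMap L M c, ?_, (adjoin_singleton_add_algebraMap x c).trans hgen⟩
  rw [add_pow_expChar, artinSchreier_apply, map_add, map_sub, map_pow, ← hx]
  ring

lemma sq_sub_trace_mul_add_norm_eq_zero (R : Type*) {A : Type*} [CommRing R] [Nontrivial R]
    [CommRing A] [Algebra R A] [Module.Free R A] (h : Module.finrank R A = 2) (y : A) :
    y ^ 2 - algebraMap R A (Algebra.trace R A y) * y + algebraMap R A (Algebra.norm R y) = 0 := by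
  have := Module.finite_of_finrank_eq_succ h
  let b := Module.finBasisOfFinrankEq R A h
  have hchar : (Algebra.lmul R A y).charpoly =
      X ^ 2 - C (Algebra.trace R A y) * X + C (Algebra.norm R y) := by
    rw [← LinearMap.charpoly_toMatrix _ b, Matrix.charpoly_fin_two,
      Algebra.trace_eq_matrix_trace b, Algebra.norm_eq_matrix_det b]
    rfl
  have hroot := Algebra.aeval_self_charpoly_lmul (R := R) y
  rw [hchar] at hroot
  simpa using hroot

lemma algHom_apply_eq_self_or_eq_add_one {R A : Type*} [CommRing R] [CommRing A] [IsDomain A]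
    [CharP A 2] [Algebra R A] {x : A} {a : R} (hx : x ^ 2 - x = algebraMap R A a) (f : A →ₐ[R] A) :
    f x = x ∨ f x = x + 1 := by
  have hfx : f x ^ 2 - f x = algebraMap R A a := by rw [← map_pow, ← map_sub, hx, f.commutes]
  have hprod : (f x - x) * (f x - (x + 1)) = 0 := by
    linear_combination hfx - hx + (x ^ 2 - f x * x) * CharTwo.two_eq_zero (R := A)
  simpa [sub_eq_zero] using hprod

variable {L M : Type*} [Field L] [CharP L 2] [Field M] [Algebra L M]

variable (L M) in
lemma exists_isArtinSchreierRepresentative [Algebra.IsQuadraticExtension L M]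
    [Algebra.IsSeparable L M] : ∃ a : L, IsArtinSchreierRepresentative M 2 a := by
  have hdeg : Module.finrank L M = 2 := Algebra.IsQuadraticExtension.finrank_eq_two L M
  obtain ⟨y, hy⟩ := Algebra.trace_surjective L M 1
  refine ⟨-Algebra.norm L y, y, ?_, ?_⟩
  · have hquad := sq_sub_trace_mul_add_norm_eq_zero L hdeg y
    rw [hy, map_one] at hquad
    rw [map_neg]
    linear_combination hquad
  · have := Subalgebra.isSimpleOrder_of_finrank hdeg
    refine (eq_bot_or_eq_top _).resolve_left fun hbot ↦ ?_
    obtain ⟨c, rfl⟩ := Algebra.mem_bot.mp (hbot ▸ Algebra.self_mem_adjoin_singleton L y)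
    have htrace : Algebra.trace L M (algebraMap L M c) = 0 := by
      rw [Algebra.trace_algebraMap, hdeg, two_nsmul, CharTwo.add_self_eq_zero]
    exact zero_ne_one (htrace.symm.trans hy)

lemma IsArtinSchreierRepresentative.sub_mem_range [IsGalois L M] {a b : L}
    (ha : IsArtinSchreierRepresentative M 2 a) (hb : IsArtinSchreierRepresentative M 2 b) :
    b - a ∈ (artinSchreier L 2).range := by
  have : CharP M 2 := charP_of_injective_algebraMap (algebraMap L M).injective 2
  obtain ⟨x, hx, hxgen⟩ := ha
  obtain ⟨y, hy, hygen⟩ := hb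
  have eq_id_of_apply_eq {z : M} (hz : Algebra.adjoin L {z} = ⊤) {f : M →ₐ[L] M} (hfz : f z = z) :
      f = AlgHom.id L M :=
    AlgHom.ext_of_adjoin_eq_top hz (by simpa using hfz)
  have hfixed (f : M →ₐ[L] M) : f (y - x) = y - x := by
    rcases algHom_apply_eq_self_or_eq_add_one hx f with hfx | hfx
    · simp [eq_id_of_apply_eq hxgen hfx]
    · rcases algHom_apply_eq_self_or_eq_add_one hy f with hfy | hfy
      · simp [eq_id_of_apply_eq hygen hfy]
      · rw [map_sub, hfx, hfy, add_sub_add_right_eq_sub]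
  obtain ⟨c, hc⟩ := (InfiniteGalois.mem_range_algebraMap_iff_fixed _).mpr fun σ ↦
    show σ.toAlgHom (y - x) = y - x from hfixed _
  refine ⟨c, (algebraMap L M).injective ?_⟩
  rw [artinSchreier_apply, map_sub, map_sub, map_pow, hc, ← hx, ← hy, sub_pow_expChar]
  ring

lemma IsArtinSchreierRepresentative.iff_sub_mem_range [IsGalois L M] {a b : L}
    (ha : IsArtinSchreierRepresentative M 2 a) :
    IsArtinSchreierRepresentative M 2 b ↔ b - a ∈ (artinSchreier L 2).range := by
  refine ⟨ha.sub_mem_range, fun ⟨c, hc⟩ ↦ ?_⟩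
  simpa [hc] using ha.add_artinSchreier c

end ArtinSchreierRepresentative

theorem unique_standard_form_representative_general
    (k : Type*) [Field k] [CharP k 2] [PerfectRing k 2]
    (hk : Function.Surjective (artinSchreier k 2))
    (M : Type*) [Field M] [Algebra (LaurentSeries k) M]
    [IsGalois (LaurentSeries k) M] (hM : Module.finrank (LaurentSeries k) M = 2) :
    ∃! a : LaurentSeries k,
      (∃ p : Polynomial k, (∀ n, p.coeff n ≠ 0 → Odd n) ∧
        a = Polynomial.aeval ((HahnSeries.single (1 : ℤ) (1 : k))⁻¹ : LaurentSeries k) p) ∧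
      ∃ x : M, x ^ 2 - x = algebraMap (LaurentSeries k) M a ∧
        Algebra.adjoin (LaurentSeries k) ({x} : Set M) = ⊤ := by
  have : Algebra.IsQuadraticExtension k⸨X⸩ M := ⟨hM⟩
  obtain ⟨a₀, ha₀⟩ := exists_isArtinSchreierRepresentative k⸨X⸩ M
  have hcoset := existsUnique_mem_and_sub_mem_of_isCompl
    (isCompl_standardForm_range_artinSchreier hk) a₀
  exact (existsUnique_congr fun a ↦ and_congr mem_standardForm_two ha₀.iff_sub_mem_range.symm).mp
    hcoset

/-- Let `k` be an algebraically closed field of characteristic 2 and `L = k((t))`.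
Every `ℤ/2`-extension `M/L` admits a unique Artin–Schreier representative
`a ∈ t⁻¹k[t⁻¹]` in standard form (a polynomial in `t⁻¹` with only odd-degree terms)
with `M ≅ L[x]/(x² − x − a)`. -/
theorem unique_standard_form_representative
    (k : Type*) [Field k] [IsAlgClosed k] [CharP k 2]
    (M : Type*) [Field M] [Algebra (LaurentSeries k) M]
    [IsGalois (LaurentSeries k) M] (hM : Module.finrank (LaurentSeries k) M = 2) :
    ∃! a : LaurentSeries k,
      (∃ p : Polynomial k, (∀ n, p.coeff n ≠ 0 → Odd n) ∧
        a = Polynomial.aeval ((HahnSeries.single (1 : ℤ) (1 : k))⁻¹ : LaurentSeries k) p) ∧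
      ∃ x : M, x ^ 2 - x = algebraMap (LaurentSeries k) M a ∧
        Algebra.adjoin (LaurentSeries k) ({x} : Set M) = ⊤ :=
  unique_standard_form_representative_general k (artinSchreier_surjective_of_isAlgClosed k 2) M hM
end

section
/- Let k be algebraically closed of characteristic 2, K = k((s)), L = k((t)) with t³ = s, and σ a generator of Gal(L/K). Let a ∈ t⁻¹k[t⁻¹] be nonzero in standard form (only odd-degree terms in t⁻¹). Then the Galois closure N over K of the Artin-Schreier extension L[x]/(x²−x−a) satisfies Gal(N/K) ≅ A₄ if and only if a has no nonzero terms of degree divisible by 3. -/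
/-!
Because `L / K` is Galois of degree 3, its automorphism `σ` multiplies `t⁻¹` by a primitive cube
root of unity `ω ∈ k`, so the conjugates of `a` are the `a(ω ^ i t⁻¹)` and `Tr a` is `3` times the
part of `a` in exponents divisible by `3`.

Let `℘ y = y ^ 2 - y` and let `V = Gal(N / L)`, an elementary abelian 2-group with quotient of order
`3`. For `g` of order `3` the sum `u = x + g x + g² x` satisfies `℘ u = Tr a`. If `Gal(N / K) ≅ A₄`
then `u ∈ K`, since every square fixes `u` and the squares generate `A₄`; so `Tr a ∈ ℘(K)`.
Conversely, if `u ∈ K`, an element of `V` is determined by its action on `x` and `g x`, and one that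
commutes with `g` is trivial because it shifts `u` by three times its shift of `x`. Then `g` acts on
`V` with `1` as its only fixed point, and `|V| ≤ 4` forces `Gal(N / K) ≅ A₄`.

Finally, a polar part with only odd exponents lies in `℘(L)` only if it vanishes, because a negative
order of `℘ y` is even; this applies both to `a` and to `Tr a`.
-/

section Groups

theorem alternatingGroup_eq_top_of_sq_mem {α : Type*} [Fintype α] [DecidableEq α]
    {S : Subgroup (alternatingGroup α)} (hS : ∀ g, g ^ 2 ∈ S) : S = ⊤ := by
  have hle : alternatingGroup α ≤ S.map (alternatingGroup α).subtype := by
    refine Equiv.Perm.closure_three_cycles_eq_alternating.ge.trans ?_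
    refine (Subgroup.closure_le _).mpr fun g (hg : g.IsThreeCycle) ↦ ?_
    refine ⟨(⟨g, hg.mem_alternatingGroup⟩ ^ 2) ^ 2, hS _, ?_⟩
    have hg3 : g ^ 3 = 1 := hg.orderOf ▸ pow_orderOf_eq_one g
    change (g ^ 2) ^ 2 = g
    rw [← pow_mul, pow_succ g 3, hg3, one_mul]
  refine eq_top_iff.mpr fun g _ ↦ ?_
  obtain ⟨s, hs, hsg⟩ := hle g.2
  rwa [← Subtype.ext hsg]

theorem nonempty_mulEquiv_alternatingGroup_of_not_normal {G : Type*} [Group G]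
    (hG : Nat.card G = 12) {P : Subgroup G} (hP : Nat.card P = 3) (hn : ¬ P.Normal) :
    Nonempty (G ≃* alternatingGroup (Fin 4)) := by
  have : Finite G := Nat.finite_of_card_ne_zero (by omega)
  have hidx : Nat.card (G ⧸ P) = 4 := by
    have hmul := P.card_eq_card_quotient_mul_card_subgroup
    rw [hG, hP] at hmul
    omega
  have hcore : P.normalCore = ⊥ := by
    have hdvd := Subgroup.card_dvd_of_le P.normalCore_le
    rw [hP, Nat.dvd_prime Nat.prime_three] at hdvd
    refine Subgroup.card_eq_one.mp (hdvd.resolve_right fun h3 ↦ hn ?_)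
    exact Subgroup.eq_of_le_of_card_ge P.normalCore_le (hP.trans h3.symm).le ▸
      P.normalCore_normal
  let e : Equiv.Perm (G ⧸ P) ≃* Equiv.Perm (Fin 4) :=
    (Finite.equivFinOfCardEq hidx).permCongrHom
  let φ : G →* Equiv.Perm (Fin 4) := e.toMonoidHom.comp (MulAction.toPermHom G (G ⧸ P))
  have hφ : Function.Injective φ := by
    refine e.injective.comp ?_
    rw [← MonoidHom.ker_eq_bot_iff, ← Subgroup.normalCore_eq_ker, hcore]
  have hrange : φ.range = alternatingGroup (Fin 4) := by
    apply Equiv.Perm.eq_alternatingGroup_of_index_eq_two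
    have hmul := φ.range.card_mul_index
    rw [← Nat.card_congr (MonoidHom.ofInjective hφ).toEquiv, hG, Nat.card_perm,
      Nat.card_fin, show Nat.factorial 4 = 12 * 2 from rfl] at hmul
    exact Nat.eq_of_mul_eq_mul_left (by norm_num) hmul
  exact ⟨(MonoidHom.ofInjective hφ).trans (MulEquiv.subgroupCongr hrange)⟩

theorem natCard_modEq_one_of_forall_commute {G : Type*} [Group G] {V : Subgroup G} [V.Normal]
    [Finite V] {p : ℕ} [Fact p.Prime] {g : G} (hg : g ^ p = 1)
    (hfix : ∀ h ∈ V, Commute g h → h = 1) : Nat.card V ≡ 1 [MOD p] := by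
  classical
  have := Fintype.ofFinite V
  let c : Equiv.Perm V := MulAut.toPerm V (MulAut.conjNormal g)
  have hc : c ^ p ^ 1 = 1 := by rw [pow_one, ← map_pow, ← map_pow, hg, map_one, map_one]
  have hfixed : c.supportᶜ = {1} := by
    ext v
    rw [Finset.mem_compl, Equiv.Perm.notMem_support, Finset.mem_singleton]
    refine ⟨fun hv ↦ ?_, fun hv ↦ hv ▸ map_one (MulAut.conjNormal g)⟩
    have hconj : g * v * g⁻¹ = v := congrArg Subtype.val hv
    exact Subtype.ext (hfix v v.2 (mul_inv_eq_iff_eq_mul.mp hconj))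
  have hmod := Equiv.Perm.card_compl_support_modEq hc
  rw [hfixed, Finset.card_singleton, ← Nat.card_eq_fintype_card] at hmod
  exact hmod.symm

theorem nonempty_mulEquiv_alternatingGroup_of_forall_commute {G : Type*} [Group G]
    {V : Subgroup G} [V.Normal] (hidx : V.index = 3) (hV : V ≠ ⊥) [Finite V]
    (hcard : Nat.card V ≤ 4) {g : G} (hg : orderOf g = 3)
    (hfix : ∀ h ∈ V, Commute g h → h = 1) : Nonempty (G ≃* alternatingGroup (Fin 4)) := by
  have hVcard : Nat.card V = 4 := by
    have hmod := natCard_modEq_one_of_forall_commute (hg ▸ pow_orderOf_eq_one g) hfix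
    have hone := (Subgroup.one_lt_card_iff_ne_bot V).mpr hV
    rw [Nat.ModEq] at hmod
    omega
  have hP : Nat.card (Subgroup.zpowers g) = 3 := by rw [Nat.card_zpowers, hg]
  have hG : Nat.card G = 12 := by rw [← V.card_mul_index, hVcard, hidx]
  refine nonempty_mulEquiv_alternatingGroup_of_not_normal hG hP fun hnormal ↦ hV ?_
  have hdisj : Disjoint (Subgroup.zpowers g) V :=
    Subgroup.disjoint_of_coprime_natCard (by rw [hP, hVcard]; norm_num)
  exact (Subgroup.eq_bot_iff_forall V).mpr fun h hh ↦ hfix h hh <|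
    Subgroup.commute_of_normal_of_disjoint _ _ hnormal inferInstance hdisj g h
      (Subgroup.mem_zpowers g) hh

end Groups

section Trace

theorem algebraMap_trace_eq_sum_pow_apply {K L : Type*} [Field K] [Field L] [Algebra K L]
    [IsGalois K L] {ℓ : ℕ} (hℓ : ℓ.Prime) (hKL : Module.finrank K L = ℓ)
    {σ : L ≃ₐ[K] L} (hσ : σ ≠ 1) (a : L) :
    algebraMap K L (Algebra.trace K L a) = ∑ i ∈ Finset.range ℓ, (σ ^ i) a := by
  classical
  have := Fact.mk hℓ
  have : FiniteDimensional K L := .of_finrank_pos (hKL ▸ hℓ.pos)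
  have hcard : Nat.card (L ≃ₐ[K] L) = ℓ := (IsGalois.card_aut_eq_finrank K L).trans hKL
  have horder : orderOf σ = ℓ := orderOf_eq_prime (hcard ▸ pow_card_eq_one') hσ
  have hgen (τ : L ≃ₐ[K] L) : τ ∈ Subgroup.zpowers σ := mem_zpowers_of_prime_card hcard hσ
  rw [trace_eq_sum_automorphisms, ← IsCyclic.image_range_card hgen, hcard, Finset.sum_image]
  exact fun i hi j hj hij ↦ pow_injOn_Iio_orderOf (by simpa [horder] using hi)
    (by simpa [horder] using hj) hij

end Trace

section LaurentSeries

open LaurentSeries Polynomial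

variable {k : Type*} [Field k]

local notation "𝐭" => (HahnSeries.single (1 : ℤ) (1 : k) : k⸨X⸩)

theorem order_add_eq_left {Γ R : Type*} [LinearOrder Γ] [Zero Γ] [AddMonoid R]
    {f g : HahnSeries Γ R} (hf : f ≠ 0) (hfg : f.order < g.order) : (f + g).order = f.order := by
  have hcoeff : (f + g).coeff f.order ≠ 0 := by
    rw [HahnSeries.coeff_add, HahnSeries.coeff_eq_zero_of_lt_order hfg, add_zero]
    exact HahnSeries.coeff_order_eq_zero.not.mpr hf
  refine (HahnSeries.order_le_of_coeff_ne_zero hcoeff).antisymm ?_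
  simpa only [min_eq_left hfg.le] using
    HahnSeries.min_order_le_order_add (HahnSeries.ne_zero_of_coeff_ne_zero hcoeff)

theorem natCast_dvd_order_pow_sub_self {n : ℕ} (hn : 1 < n) {y : k⸨X⸩}
    (hy : (y ^ n - y).order < 0) : (n : ℤ) ∣ (y ^ n - y).order := by
  have hneg : y.order < 0 := by
    by_contra hpos
    rw [not_lt] at hpos
    have hne : y ^ n + -y ≠ 0 := by
      intro h0
      simp [sub_eq_add_neg, h0] at hy
    have hmin := HahnSeries.min_order_le_order_add hne
    rw [HahnSeries.order_pow, HahnSeries.order_neg, nsmul_eq_mul, ← sub_eq_add_neg] at hmin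
    have : 0 ≤ (n : ℤ) * y.order := by positivity
    omega
  have hlt : n • y.order < y.order := by
    rw [nsmul_eq_mul]
    have : (1 : ℤ) < n := mod_cast hn
    nlinarith
  have hy0 : y ≠ 0 := by
    rintro rfl
    simp at hneg
  rw [sub_eq_add_neg, order_add_eq_left (pow_ne_zero n hy0), HahnSeries.order_pow, nsmul_eq_mul]
  · exact dvd_mul_right _ _
  · rwa [HahnSeries.order_pow, HahnSeries.order_neg]

theorem algebraMap_eq_hahnSeries_C (c : k) : algebraMap k k⸨X⸩ c = HahnSeries.C c := by
  simp [HahnSeries.algebraMap_apply']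

theorem coeff_aeval_inv_single (q : k[X]) (m : ℤ) :
    (aeval (𝐭)⁻¹ q).coeff m = if m ≤ 0 then q.coeff m.natAbs else 0 := by
  induction q using Polynomial.induction_on' with
  | add p q hp hq =>
    rw [map_add, HahnSeries.coeff_add, hp, hq]
    split_ifs <;> simp
  | monomial n c =>
    rw [aeval_monomial, algebraMap_eq_hahnSeries_C, HahnSeries.C_mul_eq_smul, HahnSeries.inv_single,
      HahnSeries.single_pow, HahnSeries.coeff_smul, HahnSeries.coeff_single, coeff_monomial]
    simp only [inv_one, one_pow, smul_eq_mul, mul_ite, mul_one, mul_zero, nsmul_eq_mul]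
    split_ifs <;> first | rfl | omega

theorem order_aeval_inv_single (q : k[X]) : (aeval (𝐭)⁻¹ q).order = -q.natDegree := by
  rcases eq_or_ne q 0 with rfl | hq
  · simp
  have hlead : (aeval (𝐭)⁻¹ q).coeff (-q.natDegree) ≠ 0 := by
    rw [coeff_aeval_inv_single, if_pos (by omega)]
    simpa using hq
  refine (HahnSeries.order_le_of_coeff_ne_zero hlead).antisymm ?_
  have hcoeff := HahnSeries.coeff_order_eq_zero.not.mpr (HahnSeries.ne_zero_of_coeff_ne_zero hlead)
  rw [coeff_aeval_inv_single] at hcoeff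
  split_ifs at hcoeff with hle
  · have := le_natDegree_of_ne_zero hcoeff
    omega
  · exact absurd rfl hcoeff

theorem exists_pow_sub_self_eq_aeval_inv_single_iff {m : ℕ} (hm : 1 < m) {q : k[X]}
    (hq : ∀ n, q.coeff n ≠ 0 → ¬ m ∣ n) :
    (∃ y, y ^ m - y = aeval (𝐭)⁻¹ q) ↔ q = 0 := by
  refine ⟨fun ⟨y, hy⟩ ↦ ?_, fun hq0 ↦ ⟨0, by simp [hq0, (zero_lt_one.trans hm).ne']⟩⟩
  by_contra hq0
  have hdeg : ¬ m ∣ q.natDegree := hq _ (leadingCoeff_ne_zero.mpr hq0)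
  have hpos : 0 < q.natDegree := Nat.pos_of_ne_zero fun h ↦ hdeg (h ▸ dvd_zero m)
  have hdvd := natCast_dvd_order_pow_sub_self hm (y := y) (by
    rw [hy, order_aeval_inv_single]
    omega)
  rw [hy, order_aeval_inv_single, Int.dvd_neg, Int.natCast_dvd_natCast] at hdvd
  exact hdeg hdvd

theorem exists_pow_eq_one_add_X_mul {n : ℕ} (hn : (n : k) ≠ 0) (F : PowerSeries k) :
    ∃ Y : PowerSeries k, Y ^ n = 1 + PowerSeries.X * F := by
  have hn0 : n ≠ 0 := by
    rintro rfl
    simp at hn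
  obtain ⟨Y, hY, -⟩ := HenselianRing.is_henselian
    (I := Ideal.span {(PowerSeries.X : PowerSeries k)})
    (X ^ n - C (1 + PowerSeries.X * F)) (monic_X_pow_sub_C _ hn0) 1
    (by simp [Ideal.mem_span_singleton])
    (by
      have hunit : IsUnit (n : PowerSeries k) := by
        rw [PowerSeries.isUnit_iff_constantCoeff]
        simpa using hn
      simpa [derivative_X_pow] using hunit.map (Ideal.Quotient.mk _))
  exact ⟨Y, by simpa [sub_eq_zero] using hY⟩

theorem order_nonneg_of_pow_eq_one_add_single_mul_pow {n : ℕ} (hn : 1 < n) {f y : k⸨X⸩}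
    (h : y ^ n = 1 + 𝐭 * f ^ n) : 0 ≤ f.order := by
  by_contra! hf
  have hf0 : f ≠ 0 := by
    rintro rfl
    simp at hf
  have ht : 𝐭 ≠ 0 := HahnSeries.single_ne_zero one_ne_zero
  have hord : (𝐭 * f ^ n).order = 1 + n * f.order := by
    rw [HahnSeries.order_mul ht (pow_ne_zero _ hf0), HahnSeries.order_pow,
      HahnSeries.order_single one_ne_zero, nsmul_eq_mul]
  have hneg : (𝐭 * f ^ n).order < 0 := by
    rw [hord]
    have : (1 : ℤ) < n := mod_cast hn
    nlinarith
  have heq : n * y.order = 1 + n * f.order := by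
    have hlt : (𝐭 * f ^ n).order < (1 : k⸨X⸩).order := by rwa [HahnSeries.order_one]
    rw [← hord, ← order_add_eq_left (mul_ne_zero ht (pow_ne_zero n hf0)) hlt, add_comm, ← h,
      HahnSeries.order_pow, nsmul_eq_mul]
  have hdvd : (n : ℤ) ∣ 1 := (Int.dvd_add_left ⟨f.order, rfl⟩).mp ⟨y.order, heq.symm⟩
  have := Int.eq_one_of_dvd_one (by positivity) hdvd
  omega

-- No continuity of `σ` is assumed: by Hensel `1 + t F ^ n` is an `n`-th power, and its image could
-- not be one if `σ F` had a pole.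
theorem order_map_ofPowerSeries_nonneg {σ : k⸨X⸩ →ₐ[k] k⸨X⸩} (hσ : σ 𝐭 = 𝐭)
    (F : PowerSeries k) : 0 ≤ (σ (HahnSeries.ofPowerSeries ℤ k F)).order := by
  obtain ⟨n, hn, hnk⟩ : ∃ n : ℕ, 1 < n ∧ (n : k) ≠ 0 := by
    by_cases h2 : (2 : k) = 0
    · refine ⟨3, by norm_num, fun h3 ↦ one_ne_zero (α := k) ?_⟩
      push_cast at h3
      linear_combination h3 - h2
    · exact ⟨2, by norm_num, mod_cast h2⟩
  obtain ⟨Y, hY⟩ := exists_pow_eq_one_add_X_mul hnk (F ^ n)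
  refine order_nonneg_of_pow_eq_one_add_single_mul_pow hn
    (y := σ (HahnSeries.ofPowerSeries ℤ k Y)) ?_
  rw [← map_pow, ← map_pow, hY]
  simp [hσ]

theorem map_ofPowerSeries_coe {σ : k⸨X⸩ →ₐ[k] k⸨X⸩} (hσ : σ 𝐭 = 𝐭) (P : k[X]) :
    σ (HahnSeries.ofPowerSeries ℤ k P) = HahnSeries.ofPowerSeries ℤ k P := by
  have hP : HahnSeries.ofPowerSeries ℤ k P = aeval 𝐭 P := by
    induction P using Polynomial.induction_on' with
    | add p q hp hq => simp [hp, hq]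
    | monomial n c =>
      rw [aeval_monomial, algebraMap_eq_hahnSeries_C, ← Polynomial.C_mul_X_pow_eq_monomial]
      simp
  rw [hP, ← aeval_algHom_apply, hσ]

theorem map_ofPowerSeries {σ : k⸨X⸩ →ₐ[k] k⸨X⸩} (hσ : σ 𝐭 = 𝐭) (F : PowerSeries k) :
    σ (HahnSeries.ofPowerSeries ℤ k F) = HahnSeries.ofPowerSeries ℤ k F := by
  ext m
  obtain ⟨n, hn⟩ : ∃ n : ℕ, m < n := ⟨m.toNat + 1, by omega⟩
  have hcoeff {g : k⸨X⸩} (hg : 0 ≤ g.order) : (𝐭 ^ n * g).coeff m = 0 := by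
    rw [HahnSeries.single_pow, one_pow, HahnSeries.coeff_single_mul, one_mul]
    exact HahnSeries.coeff_eq_zero_of_lt_order (by simp only [nsmul_eq_mul, mul_one]; omega)
  have hcoeff_shift {τ : k⸨X⸩ →ₐ[k] k⸨X⸩} (hτ : τ 𝐭 = 𝐭) :
      (τ (HahnSeries.ofPowerSeries ℤ k F)).coeff m =
        (HahnSeries.ofPowerSeries ℤ k (F.trunc n)).coeff m := by
    conv_lhs => rw [F.eq_X_pow_mul_shift_add_trunc n]
    rw [map_add, map_add, map_ofPowerSeries_coe hτ, map_mul, map_mul, map_pow, map_pow,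
      HahnSeries.ofPowerSeries_X, hτ, HahnSeries.coeff_add,
      hcoeff (order_map_ofPowerSeries_nonneg hτ _), zero_add]
  exact (hcoeff_shift hσ).trans (hcoeff_shift (τ := AlgHom.id k k⸨X⸩) rfl).symm

theorem algHom_eq_id_of_map_single {σ : k⸨X⸩ →ₐ[k] k⸨X⸩} (hσ : σ 𝐭 = 𝐭) :
    σ = AlgHom.id k k⸨X⸩ := by
  ext1 f
  obtain ⟨F, G, -, rfl⟩ := IsFractionRing.div_surjective (A := PowerSeries k) f
  rw [AlgHom.id_apply, map_div₀]
  simp_rw [LaurentSeries.coe_algebraMap, map_ofPowerSeries hσ]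

theorem exists_algebraMap_eq_of_pow_eq_one {n : ℕ} (hn : (n : k) ≠ 0) {u : k⸨X⸩}
    (hu : u ^ n = 1) : ∃ c : k, algebraMap k k⸨X⸩ c = u := by
  have hn0 : 0 < n := Nat.pos_of_ne_zero (by rintro rfl; simp at hn)
  obtain ⟨U, rfl⟩ : ∃ U : PowerSeries k, algebraMap _ k⸨X⸩ U = u :=
    IsIntegrallyClosed.exists_algebraMap_eq_of_isIntegral_pow hn0 (hu ▸ isIntegral_one)
  have hU : U ^ n = 1 := by
    apply FaithfulSMul.algebraMap_injective (PowerSeries k) k⸨X⸩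
    rw [map_pow, hu, map_one]
  set c := PowerSeries.constantCoeff U with hc
  have hcn : c ^ n = 1 := by rw [hc, ← map_pow, hU, map_one]
  have hsum : IsUnit (∑ i ∈ Finset.range n, U ^ i * PowerSeries.C c ^ (n - 1 - i)) := by
    rw [PowerSeries.isUnit_iff_constantCoeff]
    have hterm : ∀ i ∈ Finset.range n, c ^ i * c ^ (n - 1 - i) = c ^ (n - 1) := fun i hi ↦ by
      rw [← pow_add, Nat.add_sub_cancel' (Nat.le_sub_one_of_lt (Finset.mem_range.mp hi))]
    have hc0 : c ≠ 0 := by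
      intro h0
      simp [h0, hn0.ne'] at hcn
    simpa [← hc, Finset.sum_congr rfl hterm] using ⟨hn, fun h ↦ absurd h hc0⟩
  have hUc : U = PowerSeries.C c := by
    refine sub_eq_zero.mp (hsum.mul_right_eq_zero.mp ?_)
    rw [(Commute.all U _).geom_sum₂_mul, hU, ← map_pow, hcn, map_one, sub_self]
  refine ⟨c, ?_⟩
  rw [hUc]
  simp [HahnSeries.algebraMap_apply']

theorem map_aeval_inv_single {σ : k⸨X⸩ →ₐ[k] k⸨X⸩} {ω : k}
    (hσ : σ (𝐭)⁻¹ = algebraMap k _ ω * (𝐭)⁻¹) (q : k[X]) :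
    σ (aeval (𝐭)⁻¹ q) = aeval (𝐭)⁻¹ (q.comp (C ω * X)) := by
  rw [aeval_comp, map_mul, aeval_C, aeval_X, ← hσ, aeval_algHom_apply]

theorem exists_isPrimitiveRoot_of_map_single_pow {ℓ : ℕ} (hℓ : ℓ.Prime) (hℓk : (ℓ : k) ≠ 0)
    {σ : k⸨X⸩ →ₐ[k] k⸨X⸩} (hσ : σ ≠ AlgHom.id k k⸨X⸩) (hpow : σ (𝐭 ^ ℓ) = 𝐭 ^ ℓ) :
    ∃ ω : k, IsPrimitiveRoot ω ℓ ∧ σ (𝐭)⁻¹ = algebraMap k _ ω * (𝐭)⁻¹ := by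
  have := Fact.mk hℓ
  have ht : 𝐭 ≠ 0 := HahnSeries.single_ne_zero one_ne_zero
  have hu : (σ (𝐭)⁻¹ * 𝐭) ^ ℓ = 1 := by
    rw [mul_pow, map_inv₀, inv_pow, ← map_pow, hpow, inv_mul_cancel₀ (pow_ne_zero _ ht)]
  obtain ⟨ω, hω⟩ := exists_algebraMap_eq_of_pow_eq_one hℓk hu
  have hω1 : ω ≠ 1 := by
    rintro rfl
    refine hσ (algHom_eq_id_of_map_single ?_)
    rw [map_one, map_inv₀, eq_comm, inv_mul_eq_one₀ (by simp)] at hω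
    exact hω
  have hωℓ : ω ^ ℓ = 1 := by
    apply (algebraMap k k⸨X⸩).injective
    rw [map_pow, hω, hu, map_one]
  refine ⟨ω, orderOf_eq_prime hωℓ hω1 ▸ IsPrimitiveRoot.orderOf ω, ?_⟩
  rw [hω, mul_assoc, mul_inv_cancel₀ ht, mul_one]

theorem sum_pow_pow_eq_ite {R : Type*} [CommRing R] [IsDomain R] {ℓ : ℕ} (hℓ : ℓ.Prime) {ω : R}
    (hω : IsPrimitiveRoot ω ℓ) (n : ℕ) :
    ∑ i ∈ Finset.range ℓ, (ω ^ i) ^ n = if ℓ ∣ n then (ℓ : R) else 0 := by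
  simp_rw [pow_right_comm ω _ n]
  split_ifs with hn
  · simp [(hω.pow_eq_one_iff_dvd n).mpr hn]
  · exact (hω.pow_of_coprime n ((hℓ.coprime_iff_not_dvd.mpr hn).symm)).geom_sum_eq_zero hℓ.one_lt

theorem sum_comp_C_pow_mul_X {R : Type*} [CommRing R] [IsDomain R] {ℓ : ℕ} (hℓ : ℓ.Prime) {ω : R}
    (hω : IsPrimitiveRoot ω ℓ) (q : R[X]) :
    ∑ i ∈ Finset.range ℓ, q.comp (C (ω ^ i) * X) = (ℓ : R) • expand R ℓ (contract ℓ q) := by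
  ext n
  simp_rw [finsetSum_coeff, comp_C_mul_X_coeff, ← Finset.mul_sum, sum_pow_pow_eq_ite hℓ hω,
    coeff_smul, smul_eq_mul, coeff_expand hℓ.pos, coeff_contract hℓ.ne_zero]
  split_ifs with hn
  · rw [Nat.div_mul_cancel hn, mul_comm]
  · rw [mul_zero, mul_zero]

theorem expand_contract_eq_zero_iff {R : Type*} [CommSemiring R] {ℓ : ℕ} (hℓ : ℓ ≠ 0) (q : R[X]) :
    expand R ℓ (contract ℓ q) = 0 ↔ ∀ n, q.coeff n ≠ 0 → ¬ ℓ ∣ n := by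
  rw [expand_eq_zero (Nat.pos_of_ne_zero hℓ), Polynomial.ext_iff]
  simp only [coeff_contract hℓ, coeff_zero]
  refine ⟨?_, fun h n ↦ by_contra fun hn ↦ h _ hn (dvd_mul_left ℓ n)⟩
  rintro h _ hn ⟨n, rfl⟩
  exact hn (mul_comm n ℓ ▸ h n)

theorem algebraMap_trace_aeval_inv_single {K : Type*} [Field K] [Algebra K k⸨X⸩]
    [IsGalois K k⸨X⸩] {ℓ : ℕ} (hℓ : ℓ.Prime) (hKL : Module.finrank K k⸨X⸩ = ℓ)
    (hℓk : (ℓ : k) ≠ 0) (hs : 𝐭 ^ ℓ ∈ (algebraMap K k⸨X⸩).range)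
    (hk : ∀ c : k, algebraMap k k⸨X⸩ c ∈ (algebraMap K k⸨X⸩).range) (q : k[X]) :
    algebraMap K k⸨X⸩ (Algebra.trace K k⸨X⸩ (aeval (𝐭)⁻¹ q)) =
      aeval (𝐭)⁻¹ ((ℓ : k) • expand k ℓ (contract ℓ q)) := by
  have : FiniteDimensional K k⸨X⸩ := .of_finrank_pos (hKL ▸ hℓ.pos)
  have hcard := (IsGalois.card_aut_eq_finrank K k⸨X⸩).trans hKL
  have : Nontrivial (k⸨X⸩ ≃ₐ[K] k⸨X⸩) := Finite.one_lt_card_iff_nontrivial.mp (hcard ▸ hℓ.one_lt)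
  obtain ⟨σ, hσ⟩ := exists_ne (1 : k⸨X⸩ ≃ₐ[K] k⸨X⸩)
  have hfix (τ : k⸨X⸩ ≃ₐ[K] k⸨X⸩) {y : k⸨X⸩} (hy : y ∈ (algebraMap K k⸨X⸩).range) : τ y = y := by
    obtain ⟨c, rfl⟩ := hy
    exact τ.commutes c
  let toAlgHom (τ : k⸨X⸩ ≃ₐ[K] k⸨X⸩) : k⸨X⸩ →ₐ[k] k⸨X⸩ :=
    { (τ : k⸨X⸩ →+* k⸨X⸩) with commutes' := fun c ↦ hfix τ (hk c) }
  have hne : toAlgHom σ ≠ AlgHom.id k k⸨X⸩ := fun h ↦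
    hσ <| AlgEquiv.ext fun y ↦ DFunLike.congr_fun h y
  obtain ⟨ω, hω, hσω⟩ := exists_isPrimitiveRoot_of_map_single_pow hℓ hℓk hne (hfix σ hs)
  have hpow (i : ℕ) : (σ ^ i) (𝐭)⁻¹ = algebraMap k _ (ω ^ i) * (𝐭)⁻¹ := by
    induction i with
    | zero => simp
    | succ i ih =>
      rw [pow_succ', AlgEquiv.mul_apply, ih, map_mul, hfix σ (hk _), pow_succ, map_mul, mul_assoc]
      exact congrArg _ hσω
  rw [algebraMap_trace_eq_sum_pow_apply hℓ hKL hσ, ← sum_comp_C_pow_mul_X hℓ hω, map_sum]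
  exact Finset.sum_congr rfl fun i _ ↦ map_aeval_inv_single (σ := toAlgHom (σ ^ i)) (hpow i) q

theorem exists_pow_sub_self_eq_trace_aeval_inv_single_iff {K : Type*} [Field K] [Algebra K k⸨X⸩]
    [IsGalois K k⸨X⸩] {ℓ : ℕ} (hℓ : ℓ.Prime) (hKL : Module.finrank K k⸨X⸩ = ℓ)
    (hℓk : (ℓ : k) ≠ 0) (hs : 𝐭 ^ ℓ ∈ (algebraMap K k⸨X⸩).range)
    (hk : ∀ c : k, algebraMap k k⸨X⸩ c ∈ (algebraMap K k⸨X⸩).range)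
    {m : ℕ} (hm : 1 < m) {q : k[X]} (hq : ∀ n, q.coeff n ≠ 0 → ¬ m ∣ n) :
    (∃ y : K, y ^ m - y = Algebra.trace K k⸨X⸩ (aeval (𝐭)⁻¹ q)) ↔
      ∀ n, q.coeff n ≠ 0 → ¬ ℓ ∣ n := by
  have htrace := algebraMap_trace_aeval_inv_single hℓ hKL hℓk hs hk q
  set Q := (ℓ : k) • expand k ℓ (contract ℓ q) with hQ
  have hQm (n : ℕ) (hn : Q.coeff n ≠ 0) : ¬ m ∣ n := by
    refine hq n fun h0 ↦ hn ?_
    rw [hQ, coeff_smul, coeff_expand hℓ.pos, coeff_contract hℓ.ne_zero]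
    split_ifs with hdvd
    · rw [Nat.div_mul_cancel hdvd, h0, smul_zero]
    · exact smul_zero _
  calc (∃ y : K, y ^ m - y = Algebra.trace K k⸨X⸩ (aeval (𝐭)⁻¹ q)) ↔ Q = 0 := by
        refine ⟨fun ⟨y, hy⟩ ↦ ?_, fun h0 ↦ ⟨0, (algebraMap K k⸨X⸩).injective ?_⟩⟩
        · rw [← exists_pow_sub_self_eq_aeval_inv_single_iff hm hQm]
          exact ⟨algebraMap K k⸨X⸩ y, by rw [← htrace, ← hy, map_sub, map_pow]⟩
        · rw [htrace, h0]
          simp [(zero_lt_one.trans hm).ne']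
    _ ↔ expand k ℓ (contract ℓ q) = 0 := smul_eq_zero_iff_right hℓk
    _ ↔ ∀ n, q.coeff n ≠ 0 → ¬ ℓ ∣ n := expand_contract_eq_zero_iff hℓ.ne_zero q

end LaurentSeries

section ArtinSchreier

theorem sq_sub_self_eq_sq_sub_self_iff {R : Type*} [CommRing R] [IsDomain R] [CharP R 2] {u v : R} :
    u ^ 2 - u = v ^ 2 - v ↔ u = v ∨ u = v + 1 := by
  have h2 : (2 : R) = 0 := CharTwo.two_eq_zero
  have hfactor : u ^ 2 - u - (v ^ 2 - v) = (u - v) * (u - (v + 1)) := by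
    linear_combination (u * v - v ^ 2) * h2
  rw [← sub_eq_zero, hfactor, mul_eq_zero, sub_eq_zero, sub_eq_zero]

theorem sum_sq_sub_sum {R ι : Type*} [CommRing R] [CharP R 2] (s : Finset ι) (f : ι → R) :
    (∑ i ∈ s, f i) ^ 2 - ∑ i ∈ s, f i = ∑ i ∈ s, (f i ^ 2 - f i) := by
  rw [CharTwo.sum_sq, Finset.sum_sub_distrib]

variable {K N : Type*} [Field K] [Field N] [Algebra K N] [CharP N 2] {z : N} {b : K}

theorem apply_apply_eq_self {f : N ≃ₐ[K] N} (h : f z = z ∨ f z = z + 1) : f (f z) = z := by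
  rcases h with h | h
  · rw [h, h]
  · rw [h, map_add, map_one, h, add_assoc, CharTwo.add_self_eq_zero, add_zero]

theorem apply_eq_or_eq_add_one (hz : z ^ 2 - z = algebraMap K N b) (f : N ≃ₐ[K] N) :
    f z = z ∨ f z = z + 1 := by
  rw [← sq_sub_self_eq_sq_sub_self_iff, ← map_pow, ← map_sub, hz, f.commutes]

variable [IsGalois K N] [FiniteDimensional K N]

theorem exists_sq_sub_self_eq_iff_forall_apply_eq (hz : z ^ 2 - z = algebraMap K N b) :
    (∃ c : K, c ^ 2 - c = b) ↔ ∀ f : N ≃ₐ[K] N, f z = z := by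
  rw [← IsGalois.mem_range_algebraMap_iff_fixed]
  refine ⟨fun ⟨c, hc⟩ ↦ ?_, fun ⟨c, hc⟩ ↦ ⟨c, (algebraMap K N).injective ?_⟩⟩
  · rw [← hc, map_sub, map_pow, sq_sub_self_eq_sq_sub_self_iff] at hz
    rcases hz with rfl | rfl
    exacts [⟨c, rfl⟩, ⟨c + 1, by rw [map_add, map_one]⟩]
  · rw [map_sub, map_pow, hc, hz]

theorem exists_sq_sub_self_eq_of_mulEquiv_alternatingGroup {α : Type*} [Fintype α] [DecidableEq α]
    (e : (N ≃ₐ[K] N) ≃* alternatingGroup α) (hz : z ^ 2 - z = algebraMap K N b) :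
    ∃ c : K, c ^ 2 - c = b := by
  rw [exists_sq_sub_self_eq_iff_forall_apply_eq hz]
  let S := (MulAction.stabilizer (N ≃ₐ[K] N) z).comap e.symm.toMonoidHom
  have hS : S = ⊤ := alternatingGroup_eq_top_of_sq_mem fun g ↦ by
    change e.symm (g ^ 2) z = z
    rw [map_pow, pow_two, AlgEquiv.mul_apply]
    exact apply_apply_eq_self (apply_eq_or_eq_add_one hz _)
  intro f
  have hf : e f ∈ S := hS ▸ Subgroup.mem_top _
  simpa [S] using hf

end ArtinSchreier

section GaloisClosure

variable {K L N : Type*} [Field K] [Field L] [Field N] [Algebra K L] [Algebra L N] [Algebra K N]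
  [IsScalarTower K L N] [IsGalois K L]

local notation "res" => (AlgEquiv.restrictNormalHom L : (N ≃ₐ[K] N) →* (L ≃ₐ[K] L))

theorem apply_algebraMap_of_mem_ker {h : N ≃ₐ[K] N} (hh : h ∈ (res).ker) (y : L) :
    h (algebraMap L N y) = algebraMap L N y := by
  rw [← AlgEquiv.restrictNormal_commutes h L]
  exact congrArg (fun τ : L ≃ₐ[K] L ↦ algebraMap L N (τ y)) hh

theorem eq_one_of_forall_apply_apply_eq {x : N}
    (hclosure : IntermediateField.adjoin L {y : N | ∃ σ : N ≃ₐ[K] N, y = σ x} = ⊤)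
    {h : N ≃ₐ[K] N} (hh : h ∈ (res).ker) (hfix : ∀ f : N ≃ₐ[K] N, h (f x) = f x) : h = 1 := by
  ext y
  have hy : y ∈ IntermediateField.adjoin L {y : N | ∃ σ : N ≃ₐ[K] N, y = σ x} :=
    hclosure ▸ IntermediateField.mem_top
  rw [AlgEquiv.one_apply]
  induction hy using IntermediateField.adjoin_induction with
  | mem y hy => obtain ⟨f, rfl⟩ := hy; exact hfix f
  | algebraMap y => exact apply_algebraMap_of_mem_ker hh y
  | add y z _ _ hy hz => rw [map_add, hy, hz]
  | inv y _ hy => rw [map_inv₀, hy]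
  | mul y z _ _ hy hz => rw [map_mul, hy, hz]

variable {x : N} {a : L}

theorem sq_sub_self_apply (hx : x ^ 2 - x = algebraMap L N a) (f : N ≃ₐ[K] N) :
    f x ^ 2 - f x = algebraMap L N (res f a) := by
  rw [← map_pow, ← map_sub, hx]
  exact (AlgEquiv.restrictNormal_commutes f L a).symm

theorem index_ker_restrictNormalHom [IsGalois K N] [FiniteDimensional K N] :
    (res).ker.index = Module.finrank K L := by
  have : FiniteDimensional K L := .left K L N
  rw [Subgroup.index_ker, MonoidHom.range_eq_top.mpr (AlgEquiv.restrictNormalHom_surjective N),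
    Subgroup.card_top, IsGalois.card_aut_eq_finrank]

variable [CharP N 2]

theorem apply_apply_eq_or_eq_add_one (hx : x ^ 2 - x = algebraMap L N a) {h : N ≃ₐ[K] N}
    (hh : h ∈ (res).ker) (f : N ≃ₐ[K] N) : h (f x) = f x ∨ h (f x) = f x + 1 := by
  rw [← sq_sub_self_eq_sq_sub_self_iff, ← map_pow, ← map_sub, sq_sub_self_apply hx,
    apply_algebraMap_of_mem_ker hh]

theorem sq_eq_one_of_mem_ker (hx : x ^ 2 - x = algebraMap L N a)
    (hclosure : IntermediateField.adjoin L {y : N | ∃ σ : N ≃ₐ[K] N, y = σ x} = ⊤)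
    {h : N ≃ₐ[K] N} (hh : h ∈ (res).ker) : h ^ 2 = 1 := by
  refine eq_one_of_forall_apply_apply_eq hclosure (pow_mem hh 2) fun f ↦ ?_
  rw [pow_two, AlgEquiv.mul_apply]
  exact apply_apply_eq_self (apply_apply_eq_or_eq_add_one hx hh f)

theorem sq_sub_self_sum_pow_apply {ℓ : ℕ} (hℓ : ℓ.Prime) (hKL : Module.finrank K L = ℓ)
    (hx : x ^ 2 - x = algebraMap L N a) {g : N ≃ₐ[K] N} (hg : g ∉ (res).ker) :
    (∑ i ∈ Finset.range ℓ, (g ^ i) x) ^ 2 - ∑ i ∈ Finset.range ℓ, (g ^ i) x =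
      algebraMap K N (Algebra.trace K L a) := by
  simp_rw [sum_sq_sub_sum, sq_sub_self_apply hx, map_pow, ← map_sum,
    ← algebraMap_trace_eq_sum_pow_apply hℓ hKL hg, ← IsScalarTower.algebraMap_apply]

theorem eq_one_of_forall_pow_apply_eq {ℓ : ℕ} (hℓ : ℓ.Prime) (hKL : Module.finrank K L = ℓ)
    (hx : x ^ 2 - x = algebraMap L N a)
    (hclosure : IntermediateField.adjoin L {y : N | ∃ σ : N ≃ₐ[K] N, y = σ x} = ⊤)
    {g : N ≃ₐ[K] N} (hg : g ∉ (res).ker) {h : N ≃ₐ[K] N} (hh : h ∈ (res).ker)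
    (hfix : ∀ i : ℕ, h ((g ^ i) x) = (g ^ i) x) : h = 1 := by
  have := Fact.mk hℓ
  have : FiniteDimensional K L := .of_finrank_pos (hKL ▸ hℓ.pos)
  have hcard : Nat.card (L ≃ₐ[K] L) = ℓ := (IsGalois.card_aut_eq_finrank K L).trans hKL
  refine eq_one_of_forall_apply_apply_eq hclosure hh fun f ↦ ?_
  obtain ⟨i, hi⟩ : res f ∈ Submonoid.powers (res g) := mem_powers_of_prime_card hcard hg
  have hfi : f x ^ 2 - f x = (g ^ i) x ^ 2 - (g ^ i) x := by
    rw [sq_sub_self_apply hx, sq_sub_self_apply hx, map_pow, ← hi]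
  rcases sq_sub_self_eq_sq_sub_self_iff.mp hfi with hf | hf
  · rw [hf, hfix]
  · rw [hf, map_add, hfix, map_one]

theorem eq_one_of_commute_of_apply_sum_eq (hKL : Module.finrank K L = 3)
    (hx : x ^ 2 - x = algebraMap L N a)
    (hclosure : IntermediateField.adjoin L {y : N | ∃ σ : N ≃ₐ[K] N, y = σ x} = ⊤)
    {g : N ≃ₐ[K] N} (hg : g ∉ (res).ker) {h : N ≃ₐ[K] N} (hh : h ∈ (res).ker)
    (hsum : h (∑ i ∈ Finset.range 3, (g ^ i) x) = ∑ i ∈ Finset.range 3, (g ^ i) x)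
    (hgh : Commute g h) : h = 1 := by
  have hconj (i : ℕ) : h ((g ^ i) x) = (g ^ i) (h x) :=
    DFunLike.congr_fun (hgh.pow_left i).eq.symm x
  refine eq_one_of_forall_pow_apply_eq Nat.prime_three hKL hx hclosure hg hh fun i ↦ ?_
  rcases apply_apply_eq_or_eq_add_one hx hh 1 with hfix | hmove
  · exact (hconj i).trans (congrArg _ hfix)
  · simp_rw [map_sum, hconj, AlgEquiv.one_apply] at hsum hmove
    simp_rw [hmove, map_add, map_one, Finset.sum_add_distrib, Finset.sum_const, Finset.card_range,
      add_eq_left] at hsum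
    have h2 : (2 : N) = 0 := CharTwo.two_eq_zero
    exact absurd (by linear_combination hsum - h2) (one_ne_zero (α := N))

theorem natCard_ker_restrictNormalHom_le_four (hKL : Module.finrank K L = 3)
    (hx : x ^ 2 - x = algebraMap L N a)
    (hclosure : IntermediateField.adjoin L {y : N | ∃ σ : N ≃ₐ[K] N, y = σ x} = ⊤)
    {g : N ≃ₐ[K] N} (hg3 : orderOf g = 3) (hg : g ∉ (res).ker)
    (hsum : ∀ f : N ≃ₐ[K] N,
      f (∑ i ∈ Finset.range 3, (g ^ i) x) = ∑ i ∈ Finset.range 3, (g ^ i) x) :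
    Nat.card (res).ker ≤ 4 := by
  classical
  let S : Finset (N × N) := {x, x + 1} ×ˢ {g x, g x + 1}
  have hmem (h : (res).ker) : (h.1 x, h.1 (g x)) ∈ S := by
    have h0 := apply_apply_eq_or_eq_add_one hx h.2 1
    have h1 := apply_apply_eq_or_eq_add_one hx h.2 g
    simpa [S] using ⟨h0, h1⟩
  have hinj : Function.Injective fun h : (res).ker ↦ (⟨_, hmem h⟩ : S) := by
    intro h h' heq
    obtain ⟨h0, h1⟩ := Prod.mk.inj (congrArg Subtype.val heq)
    have hfix {y : N} (hy : h.1 y = h'.1 y) : (h'⁻¹ * h).1 y = y := by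
      change h'.1.symm (h.1 y) = y
      rw [hy, AlgEquiv.symm_apply_apply]
    have hfix2 : (h'⁻¹ * h).1 ((g ^ 2) x) = (g ^ 2) x := by
      have hsum3 := hsum (h'⁻¹ * h).1
      simp only [Finset.sum_range_succ, Finset.sum_range_zero, zero_add, map_add, pow_zero,
        AlgEquiv.one_apply, pow_one, hfix h0, hfix h1] at hsum3
      exact add_left_cancel hsum3
    refine (inv_mul_eq_one.mp (Subtype.ext ?_)).symm
    refine eq_one_of_forall_pow_apply_eq Nat.prime_three hKL hx hclosure hg (h'⁻¹ * h).2 fun i ↦ ?_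
    rw [← pow_mod_orderOf, hg3]
    have hi : i % 3 < 3 := Nat.mod_lt _ (by norm_num)
    interval_cases i % 3
    exacts [hfix h0, by simpa using hfix h1, hfix2]
  calc Nat.card (res).ker ≤ Nat.card S := Nat.card_le_card_of_injective _ hinj
    _ = S.card := Nat.card_eq_finsetCard S
    _ ≤ 2 * 2 := by
      rw [Finset.card_product]
      exact Nat.mul_le_mul Finset.card_le_two Finset.card_le_two

variable [IsGalois K N] [FiniteDimensional K N]

theorem ker_restrictNormalHom_ne_bot (hx : x ^ 2 - x = algebraMap L N a)
    (ha : ¬ ∃ c : L, c ^ 2 - c = a) : (res).ker ≠ ⊥ := by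
  have := IsGalois.tower_top_of_isGalois K L N
  have := FiniteDimensional.right K L N
  rw [exists_sq_sub_self_eq_iff_forall_apply_eq hx] at ha
  push Not at ha
  obtain ⟨h, hxh⟩ := ha
  intro hbot
  have hker : h.restrictScalars K ∈ (res).ker := by
    rw [MonoidHom.mem_ker]
    ext y
    apply (algebraMap L N).injective
    exact (AlgEquiv.restrictNormal_commutes _ L y).trans (h.commutes y)
  rw [hbot, Subgroup.mem_bot] at hker
  exact hxh (DFunLike.congr_fun hker x)

theorem exists_orderOf_eq_three_and_notMem_ker (hKL : Module.finrank K L = 3)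
    (hx : x ^ 2 - x = algebraMap L N a)
    (hclosure : IntermediateField.adjoin L {y : N | ∃ σ : N ≃ₐ[K] N, y = σ x} = ⊤) :
    ∃ g : N ≃ₐ[K] N, orderOf g = 3 ∧ g ∉ (res).ker := by
  have hdvd : 3 ∣ Nat.card (N ≃ₐ[K] N) := by
    rw [← hKL, ← index_ker_restrictNormalHom (N := N)]
    exact Subgroup.index_dvd_card _
  obtain ⟨g, hg⟩ := exists_prime_orderOf_dvd_card' 3 hdvd
  refine ⟨g, hg, fun hker ↦ ?_⟩
  have := orderOf_dvd_of_pow_eq_one (sq_eq_one_of_mem_ker hx hclosure hker)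
  rw [hg] at this
  norm_num at this

theorem nonempty_mulEquiv_alternatingGroup_four_iff (hKL : Module.finrank K L = 3)
    (hx : x ^ 2 - x = algebraMap L N a) (ha : ¬ ∃ c : L, c ^ 2 - c = a)
    (hclosure : IntermediateField.adjoin L {y : N | ∃ σ : N ≃ₐ[K] N, y = σ x} = ⊤) :
    Nonempty ((N ≃ₐ[K] N) ≃* alternatingGroup (Fin 4)) ↔
      ∃ c : K, c ^ 2 - c = Algebra.trace K L a := by
  obtain ⟨g, hg, hgker⟩ := exists_orderOf_eq_three_and_notMem_ker hKL hx hclosure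
  have hsum := sq_sub_self_sum_pow_apply Nat.prime_three hKL hx hgker
  refine ⟨fun ⟨e⟩ ↦ exists_sq_sub_self_eq_of_mulEquiv_alternatingGroup e hsum, fun htrace ↦ ?_⟩
  rw [exists_sq_sub_self_eq_iff_forall_apply_eq hsum] at htrace
  exact nonempty_mulEquiv_alternatingGroup_of_forall_commute (index_ker_restrictNormalHom.trans hKL)
    (ker_restrictNormalHom_ne_bot hx ha)
    (natCard_ker_restrictNormalHom_le_four hKL hx hclosure hg hgker htrace) hg
    fun h hh ↦ eq_one_of_commute_of_apply_sum_eq hKL hx hclosure hgker hh (htrace h)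

end GaloisClosure

theorem A4_iff_no_terms_divisible_by_three_general
    (k : Type*) [Field k] [CharP k 2]
    (K : Type*) [Field K] [Algebra K (LaurentSeries k)]
    [IsGalois K (LaurentSeries k)]
    (hKL : Module.finrank K (LaurentSeries k) = 3)
    (hs : (HahnSeries.single (1 : ℤ) (1 : k) : LaurentSeries k) ^ 3 ∈
      (algebraMap K (LaurentSeries k)).range)
    (hk : ∀ c : k, algebraMap k (LaurentSeries k) c ∈
      (algebraMap K (LaurentSeries k)).range)
    (p : Polynomial k) (hp : p ≠ 0) (hodd : ∀ n, p.coeff n ≠ 0 → Odd n)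
    (a : LaurentSeries k)
    (ha : a = Polynomial.aeval
      ((HahnSeries.single (1 : ℤ) (1 : k))⁻¹ : LaurentSeries k) p)
    (N : Type*) [Field N] [Algebra (LaurentSeries k) N] [Algebra K N]
    [IsScalarTower K (LaurentSeries k) N] [IsGalois K N] [FiniteDimensional K N]
    (x : N) (hx : x ^ 2 - x = algebraMap (LaurentSeries k) N a)
    (hclosure : IntermediateField.adjoin (LaurentSeries k)
      {y : N | ∃ σ : N ≃ₐ[K] N, y = σ x} = ⊤) :
    Nonempty ((N ≃ₐ[K] N) ≃* alternatingGroup (Fin 4)) ↔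
      ∀ n, p.coeff n ≠ 0 → ¬ (3 ∣ n) := by
  have h3 : ((3 : ℕ) : k) ≠ 0 := fun h ↦ by
    rw [CharP.cast_eq_zero_iff k 2] at h
    norm_num at h
  have : CharP N 2 := charP_of_injective_ringHom
    ((algebraMap (LaurentSeries k) N).comp (algebraMap k (LaurentSeries k))).injective 2
  have htwo (n : ℕ) (hn : p.coeff n ≠ 0) : ¬ 2 ∣ n := (hodd n hn).not_two_dvd_nat
  have ha_not : ¬ ∃ c : LaurentSeries k, c ^ 2 - c = a := by
    rwa [ha, exists_pow_sub_self_eq_aeval_inv_single_iff one_lt_two htwo]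
  rw [nonempty_mulEquiv_alternatingGroup_four_iff hKL hx ha_not hclosure, ha,
    exists_pow_sub_self_eq_trace_aeval_inv_single_iff Nat.prime_three hKL h3 hs hk one_lt_two htwo]

/-- Let `k` be algebraically closed of characteristic 2, `K = k((s)) ⊆ L = k((t))`
with `t³ = s` a `ℤ/3`-extension, and let `a ∈ t⁻¹k[t⁻¹]` be nonzero in standard form
(only odd-degree terms in `t⁻¹`).  If `N` is the Galois closure over `K` of the
Artin–Schreier extension `L[x]/(x² − x − a)`, then `Gal(N/K) ≅ A₄` if and only if
`a` has no nonzero terms of degree divisible by 3. -/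
theorem A4_iff_no_terms_divisible_by_three
    (k : Type*) [Field k] [IsAlgClosed k] [CharP k 2]
    (K : Type*) [Field K] [Algebra K (LaurentSeries k)]
    [IsGalois K (LaurentSeries k)]
    (hKL : Module.finrank K (LaurentSeries k) = 3)
    (hs : (HahnSeries.single (1 : ℤ) (1 : k) : LaurentSeries k) ^ 3 ∈
      (algebraMap K (LaurentSeries k)).range)
    (hk : ∀ c : k, algebraMap k (LaurentSeries k) c ∈
      (algebraMap K (LaurentSeries k)).range)
    (p : Polynomial k) (hp : p ≠ 0) (hodd : ∀ n, p.coeff n ≠ 0 → Odd n)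
    (a : LaurentSeries k)
    (ha : a = Polynomial.aeval
      ((HahnSeries.single (1 : ℤ) (1 : k))⁻¹ : LaurentSeries k) p)
    (N : Type*) [Field N] [Algebra (LaurentSeries k) N] [Algebra K N]
    [IsScalarTower K (LaurentSeries k) N] [IsGalois K N] [FiniteDimensional K N]
    (x : N) (hx : x ^ 2 - x = algebraMap (LaurentSeries k) N a)
    (hclosure : IntermediateField.adjoin (LaurentSeries k)
      {y : N | ∃ σ : N ≃ₐ[K] N, y = σ x} = ⊤) :
    Nonempty ((N ≃ₐ[K] N) ≃* alternatingGroup (Fin 4)) ↔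
      ∀ n, p.coeff n ≠ 0 → ¬ (3 ∣ n) := by
  exact A4_iff_no_terms_divisible_by_three_general k K hKL hs hk p hp hodd a ha N x hx hclosure
end
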